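/- Let H be a Hopf algebra with bijective antipode and V a simple finite-dimensional right H-comodule whose coefficient coalgebra C_V = V*⊗V satisfies S²(C_V) = C_V. Then V is isomorphic to its double dual V** as an H-comodule, and the H-comodule V*⊗V (the tensor product of the contragredient comodule V* with V, i.e. C_V equipped with the right adjoint coaction) contains a nonzero invariant vector, namely the image of the coevaluation k → V*⊗V** ≅ V*⊗V. -/

import Mathlib

/- Common infrastructure: right comodules over coalgebras, simplicity,
cosemisimplicity, subcoalgebras, adjoint coactions, normality, etc. -/

open TensorProduct

universe u

namespace QG

variable (k : Type u) [Field k]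

section Coalg

variable (C : Type u) [AddCommGroup C] [Module k C] [Coalgebra k C]

/-- `ρ : V →ₗ[k] V ⊗[k] C` is a (coassociative, counital) right coaction. -/
structure IsComod {V : Type u} [AddCommGroup V] [Module k V]
    (ρ : V →ₗ[k] V ⊗[k] C) : Prop where
  coassoc : ∀ v : V, ρ.rTensor C (ρ v) =
    (TensorProduct.assoc k V C C).symm.toLinearMap
      ((Coalgebra.comul (R := k) (A := C)).lTensor V (ρ v))
  counit : ∀ v : V, (TensorProduct.rid k V)
      ((Coalgebra.counit (R := k) (A := C)).lTensor V (ρ v)) = v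

/-- A submodule `U ≤ V` is a subcomodule if the coaction restricts to it,
i.e. maps `U` into the image of `U ⊗ C` in `V ⊗ C`. -/
def IsSubcomod {V : Type u} [AddCommGroup V] [Module k V]
    (ρ : V →ₗ[k] V ⊗[k] C) (U : Submodule k V) : Prop :=
  ∀ u ∈ U, ρ u ∈ LinearMap.range ((U.subtype).rTensor C)

/-- A simple subcomodule: a nonzero subcomodule with no nonzero proper
subcomodules below it. -/
def IsSimpleSubcomod {V : Type u} [AddCommGroup V] [Module k V]
    (ρ : V →ₗ[k] V ⊗[k] C) (U : Submodule k V) : Prop :=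
  IsSubcomod k C ρ U ∧ U ≠ ⊥ ∧
    ∀ U' : Submodule k V, U' ≤ U → IsSubcomod k C ρ U' → U' = ⊥ ∨ U' = U

/-- A comodule is simple if it is simple as a subcomodule of itself. -/
def IsSimpleComod {V : Type u} [AddCommGroup V] [Module k V]
    (ρ : V →ₗ[k] V ⊗[k] C) : Prop :=
  IsSimpleSubcomod k C ρ ⊤

/-- Morphisms of right `C`-comodules. -/
def IsComodHom {V W : Type u} [AddCommGroup V] [Module k V]
    [AddCommGroup W] [Module k W]
    (ρV : V →ₗ[k] V ⊗[k] C) (ρW : W →ₗ[k] W ⊗[k] C) (f : V →ₗ[k] W) : Prop :=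
  ρW ∘ₗ f = (f.rTensor C) ∘ₗ ρV

/-- `C` is cosemisimple: every right `C`-comodule is an (internal) direct sum
of simple subcomodules. -/
def IsCosemisimple : Prop :=
  ∀ (V : Type u) [AddCommGroup V] [Module k V]
    (ρ : V →ₗ[k] V ⊗[k] C), IsComod k C ρ →
    ∃ (ι : Type u) (U : ι → Submodule k V),
      (∀ i, IsSimpleSubcomod k C ρ (U i)) ∧
      iSupIndep U ∧ (⨆ i, U i) = ⊤

/-- Subcoalgebras of `C`, as submodules. -/
def IsSubcoalgebra (D : Submodule k C) : Prop :=
  ∀ x ∈ D, Coalgebra.comul (R := k) x ∈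
    LinearMap.range (TensorProduct.map D.subtype D.subtype)

/-- Simple subcoalgebras: nonzero ones with no nonzero proper subcoalgebras. -/
def IsSimpleSubcoalgebra (D : Submodule k C) : Prop :=
  IsSubcoalgebra k C D ∧ D ≠ ⊥ ∧
    ∀ D' : Submodule k C, D' ≤ D → IsSubcoalgebra k C D' → D' = ⊥ ∨ D' = D

/-- The coefficient space of a comodule: the smallest submodule `D ≤ C` such
that the coaction factors through `V ⊗ D`.  For a simple comodule this is its
coefficient coalgebra. -/
def coeffSpace {V : Type u} [AddCommGroup V] [Module k V]
    (ρ : V →ₗ[k] V ⊗[k] C) : Submodule k C :=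
  sInf {D : Submodule k C | ∀ v : V, ρ v ∈ LinearMap.range ((D.subtype).lTensor V)}

/-- Corestriction of a coaction along a linear map of coalgebras `π : C → D`. -/
noncomputable def cores {D : Type u} [AddCommGroup D] [Module k D]
    {V : Type u} [AddCommGroup V] [Module k V]
    (π : C →ₗ[k] D) (ρ : V →ₗ[k] V ⊗[k] C) : V →ₗ[k] V ⊗[k] D :=
  (π.lTensor V) ∘ₗ ρ

end Coalg

section Bialg

variable (H : Type u) [Ring H] [Bialgebra k H]

/-- An invariant vector for a coaction of a bialgebra. -/
def IsInvariant {V : Type u} [AddCommGroup V] [Module k V]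
    (ρ : V →ₗ[k] V ⊗[k] H) (v : V) : Prop :=
  ρ v = v ⊗ₜ[k] (1 : H)

/-- The tensor product coaction on `V ⊗ W` for a bialgebra `H`:
`v ⊗ w ↦ (v₀ ⊗ w₀) ⊗ v₁w₁`. -/
noncomputable def tensorCoact {V W : Type u}
    [AddCommGroup V] [Module k V] [AddCommGroup W] [Module k W]
    (ρV : V →ₗ[k] V ⊗[k] H) (ρW : W →ₗ[k] W ⊗[k] H) :
    (V ⊗[k] W) →ₗ[k] (V ⊗[k] W) ⊗[k] H :=
  ((LinearMap.mul' k H).lTensor (V ⊗[k] W)) ∘ₗ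
    (TensorProduct.tensorTensorTensorComm k V H W H).toLinearMap ∘ₗ
    (TensorProduct.map ρV ρW)

/-- `O(G/H)`: the right coinvariants `{x | (id ⊗ π)Δ(x) = x ⊗ 1}` of a
quotient map `π`. -/
noncomputable def quotientSpaceLeft {B : Type u} [AddCommGroup B] [Module k B] [One B]
    (π : H →ₗ[k] B) : Submodule k H :=
  LinearMap.ker ((π.lTensor H) ∘ₗ (Coalgebra.comul (R := k) (A := H)) -
    (TensorProduct.mk k H B).flip 1)

/-- `O(H\G)`: the left coinvariants `{x | (π ⊗ id)Δ(x) = 1 ⊗ x}`. -/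
noncomputable def quotientSpaceRight {B : Type u} [AddCommGroup B] [Module k B] [One B]
    (π : H →ₗ[k] B) : Submodule k H :=
  LinearMap.ker ((π.rTensor H) ∘ₗ (Coalgebra.comul (R := k) (A := H)) -
    (TensorProduct.mk k B H) 1)

end Bialg

section Hopf

variable (H : Type u) [Ring H] [HopfAlgebra k H]

/-- Iterated comultiplication `x ↦ x₁ ⊗ (x₂ ⊗ x₃)`. -/
noncomputable def comul2 : H →ₗ[k] H ⊗[k] (H ⊗[k] H) :=
  ((Coalgebra.comul (R := k) (A := H)).lTensor H) ∘ₗ (Coalgebra.comul (R := k) (A := H))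

/-- The right adjoint coaction `x ↦ x₂ ⊗ S(x₁)x₃`. -/
noncomputable def adR : H →ₗ[k] H ⊗[k] H :=
  ((LinearMap.mul' k H).lTensor H) ∘ₗ
    (TensorProduct.assoc k H H H).toLinearMap ∘ₗ
    (((TensorProduct.comm k H H).toLinearMap).rTensor H) ∘ₗ
    (TensorProduct.assoc k H H H).symm.toLinearMap ∘ₗ
    ((HopfAlgebra.antipode (R := k) (A := H)).rTensor (H ⊗[k] H)) ∘ₗ
    comul2 k H

/-- The left adjoint coaction `x ↦ x₁S(x₃) ⊗ x₂` (a left coaction, with the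
coacting tensorand on the left). -/
noncomputable def adL : H →ₗ[k] H ⊗[k] H :=
  ((LinearMap.mul' k H).rTensor H) ∘ₗ
    (TensorProduct.assoc k H H H).symm.toLinearMap ∘ₗ
    (((TensorProduct.comm k H H).toLinearMap).lTensor H) ∘ₗ
    (((HopfAlgebra.antipode (R := k) (A := H)).lTensor H).lTensor H) ∘ₗ
    comul2 k H

variable {B : Type u} [AddCommGroup B] [Module k B]

/-- `π : O(G) → O(H)` is right-normal: it is a morphism of right
`O(G)`-comodules for the right adjoint coaction, i.e. the right adjoint
coaction descends along `π`. -/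
def IsRightNormal (π : H →ₗ[k] B) : Prop :=
  ∃ ρ : B →ₗ[k] B ⊗[k] H, ρ ∘ₗ π = (π.rTensor H) ∘ₗ adR k H

/-- `π : O(G) → O(H)` is left-normal: the left adjoint coaction descends
along `π`. -/
def IsLeftNormal (π : H →ₗ[k] B) : Prop :=
  ∃ lam : B →ₗ[k] H ⊗[k] B, lam ∘ₗ π = (π.lTensor H) ∘ₗ adL k H

end Hopf

end QG

namespace QG

variable (k : Type u) [Field k]

section Coalg2

variable (C : Type u) [AddCommGroup C] [Module k C] [Coalgebra k C]

/-- A bundled simple right `C`-comodule. -/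
structure SimpleComodule where
  V : Type u
  [addCommGroup : AddCommGroup V]
  [module : Module k V]
  ρ : V →ₗ[k] V ⊗[k] C
  isComod : IsComod k C ρ
  isSimple : IsSimpleComod k C ρ

attribute [instance] SimpleComodule.addCommGroup SimpleComodule.module

/-- A simple comodule `(T, ρT)` is a constituent of a comodule `(V, ρV)`
(over a cosemisimple coalgebra) iff there is a nonzero comodule map `T → V`. -/
def IsConstituent {T V : Type u} [AddCommGroup T] [Module k T]
    [AddCommGroup V] [Module k V]
    (ρT : T →ₗ[k] T ⊗[k] C) (ρV : V →ₗ[k] V ⊗[k] C) : Prop :=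
  ∃ f : T →ₗ[k] V, f ≠ 0 ∧ IsComodHom k C ρT ρV f

/-- Isomorphism of (simple) comodules. -/
def comodIsoRel (X Y : SimpleComodule k C) : Prop :=
  ∃ e : X.V ≃ₗ[k] Y.V, IsComodHom k C X.ρ Y.ρ e.toLinearMap

/-- The set `Ĉ` of isomorphism classes of simple right `C`-comodules. -/
def SimpleComodQuot := Quot (comodIsoRel k C)

/-- The isomorphism class of a simple comodule. -/
def SimpleComodule.cls (X : SimpleComodule k C) : SimpleComodQuot k C :=
  Quot.mk _ X

/-- Group-like elements of a coalgebra; these correspond to the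
one-dimensional comodules, i.e. to characters. -/
def IsGroupLike (a : C) : Prop :=
  Coalgebra.counit (R := k) (A := C) a = (1 : k) ∧
    Coalgebra.comul (R := k) (A := C) a = a ⊗ₜ[k] a

/-- A linear map `φ : C → Z` out of a coalgebra is central if
`φ(x₁) ⊗ x₂ = φ(x₂) ⊗ x₁`. -/
def IsCentralMap {Z : Type u} [AddCommGroup Z] [Module k Z] (φ : C →ₗ[k] Z) : Prop :=
  (φ.rTensor C) ∘ₗ (Coalgebra.comul (R := k) (A := C)) =
    (φ.rTensor C) ∘ₗ (TensorProduct.comm k C C).toLinearMap ∘ₗ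
      (Coalgebra.comul (R := k) (A := C))

/-- The simple comodule `X` has "central character" `g` with respect to the
quotient map `γ : C → Z`: corestricted along `γ`, the coaction on `X` is a sum
of copies of the character `g`. -/
def HasCentralChar {Z : Type u} [AddCommGroup Z] [Module k Z]
    (γ : C →ₗ[k] Z) (X : SimpleComodule k C) (g : Z) : Prop :=
  ∀ v : X.V, cores k C γ X.ρ v = v ⊗ₜ[k] g

end Coalg2

/-- The k-span of the set of products `g * a`, `a ∈ Am`; for `Am` a submodule
this is the left ideal generated by `Am`. -/
def leftIdealGen {G : Type u} [Ring G] [Module k G] (Am : Submodule k G) :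
    Submodule k G :=
  Submodule.span k {x : G | ∃ g : G, ∃ a ∈ Am, x = g * a}

end QG

namespace QG

variable (k : Type u) [Field k]
variable {H : Type u} [Ring H] [HopfAlgebra k H]
variable {V : Type u} [AddCommGroup V] [Module k V]

/-- `φ ↦ (v ↦ φ(v₀) S(v₁))`, the map underlying the contragredient coaction. -/
noncomputable def dualPrecoact (ρ : V →ₗ[k] V ⊗[k] H) :
    Module.Dual k V →ₗ[k] (V →ₗ[k] H) where
  toFun φ := (TensorProduct.lid k H).toLinearMap ∘ₗ
    (TensorProduct.map φ (HopfAlgebra.antipode (R := k) (A := H))) ∘ₗ ρ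
  map_add' φ ψ := by
    simp [TensorProduct.map_add_left, LinearMap.add_comp, LinearMap.comp_add]
  map_smul' c φ := by
    simp [TensorProduct.map_smul_left, LinearMap.smul_comp, LinearMap.comp_smul]

/-- The contragredient (left-dual) coaction on `V*` for a finite-dimensional
right `H`-comodule `(V, ρ)`, characterized by
`φ₀(v) ⊗ φ₁ = φ(v₀) ⊗ S(v₁)`. -/
noncomputable def dualCoact [FiniteDimensional k V] (ρ : V →ₗ[k] V ⊗[k] H) :
    Module.Dual k V →ₗ[k] (Module.Dual k V) ⊗[k] H :=
  (dualTensorHomEquiv k V H).symm.toLinearMap ∘ₗ dualPrecoact k ρ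

end QG

/-! A right comodule over `C` is the same as a representation, by `f · v = v₀ f(v₁)`, of the
convolution algebra `C*`, and a functional acts by zero exactly when it vanishes on the coefficient
space. So an inclusion of coefficient spaces `C_W ⊆ C_V` is an inclusion of annihilators
`Ann V ⊆ Ann W`. If `V` is simple with basis `b`, then `r ↦ r • b` embeds `C* / Ann V` in the
semisimple module `V ^ n`, so every `w : W` is the image of `b` under a morphism `V ^ n → W`; when
`W ≠ 0` some component is a nonzero morphism `V → W`, an isomorphism if the dimensions agree.

A functional `f` acts on `V*` as the transpose of `f ∘ S` on `V`. Since `f ↦ f ∘ S` reverses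
convolution products, `V*` is a comodule, and its coefficient space is `S(C_V)`. That of `V**` is
therefore `S²(C_V)`, and the first paragraph applies to `W = V**`.

For the invariance of the coevaluation, evaluate the coaction of `V ⊗ V*` on `∑ bᵢ ⊗ bᵢ*` at
`v : V` in the second leg: this gives `v₀ ⊗ v₁ S(v₂) = v ⊗ 1`. -/

namespace QG

open Coalgebra HopfAlgebra WithConv

section Algebra

theorem exists_linearMap_apply_eq {R M N : Type*} [Ring R] [AddCommGroup M] [Module R M]
    [IsSemisimpleModule R M] [AddCommGroup N] [Module R N] {m : M} {n : N}
    (h : ∀ r : R, r • m = 0 → r • n = 0) : ∃ f : M →ₗ[R] N, f m = n := by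
  have hker : LinearMap.ker (LinearMap.toSpanSingleton R M m) ≤
      LinearMap.ker (LinearMap.toSpanSingleton R N n) := h
  obtain ⟨f, hf⟩ := IsSemisimpleModule.extension_property
    (Submodule.liftQ _ (LinearMap.toSpanSingleton R M m) le_rfl)
    (LinearMap.ker_eq_bot.1 (Submodule.ker_liftQ_eq_bot _ _ _ le_rfl))
    (Submodule.liftQ _ (LinearMap.toSpanSingleton R N n) hker)
  refine ⟨f, ?_⟩
  simpa using LinearMap.congr_fun hf (Submodule.Quotient.mk 1)

variable {k A V W : Type*} [Field k] [Ring A] [Algebra k A] [AddCommGroup V] [Module k V]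
  [Module A V] [IsScalarTower k A V] [AddCommGroup W] [Module A W]

theorem exists_linearMap_ne_zero_of_annihilator_le [IsSemisimpleModule A V]
    [FiniteDimensional k V] [Nontrivial W]
    (h : Module.annihilator A V ≤ Module.annihilator A W) : ∃ f : V →ₗ[A] W, f ≠ 0 := by
  let b := Module.finBasis k V
  obtain ⟨w, hw⟩ := exists_ne (0 : W)
  obtain ⟨f, hf⟩ : ∃ f : (Fin (Module.finrank k V) → V) →ₗ[A] W, f b = w := by
    refine exists_linearMap_apply_eq fun r hr => ?_
    have hb : Algebra.lsmul k k V r = 0 := b.ext fun i => congrFun hr i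
    exact Module.mem_annihilator.1 (h (Module.mem_annihilator.2 (LinearMap.congr_fun hb))) w
  by_contra! h0
  refine hw (hf.symm.trans ?_)
  rw [LinearMap.pi_ext' (f := f) (g := 0) fun i => by rw [h0 (f ∘ₗ _), LinearMap.zero_comp],
    LinearMap.zero_apply]

variable [Module k W] [IsScalarTower k A W]

theorem nonempty_linearEquiv_of_annihilator_le [IsSimpleModule A V] [FiniteDimensional k V]
    (h : Module.annihilator A V ≤ Module.annihilator A W)
    (hdim : Module.finrank k V = Module.finrank k W) : Nonempty (V ≃ₗ[A] W) := by
  have : Nontrivial V := IsSimpleModule.nontrivial A V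
  have hpos : 0 < Module.finrank k W := hdim ▸ Module.finrank_pos
  have : Nontrivial W := Module.nontrivial_of_finrank_pos hpos
  have : FiniteDimensional k W := Module.finite_of_finrank_pos hpos
  obtain ⟨f, hf⟩ := exists_linearMap_ne_zero_of_annihilator_le (k := k) h
  have hinj : Function.Injective f := f.injective_or_eq_zero.resolve_right hf
  have hsurj : Function.Surjective (f.restrictScalars k) :=
    (LinearMap.injective_iff_surjective_of_finrank_eq_finrank hdim).1 hinj
  exact ⟨LinearEquiv.ofBijective f ⟨hinj, hsurj⟩⟩

end Algebra

section Slice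

section Semiring

variable {R M N P : Type*} [CommSemiring R] [AddCommMonoid M] [Module R M] [AddCommMonoid N]
  [Module R N] [AddCommMonoid P] [Module R P]

/-- The slice map `φ ⊗ id : M ⊗ N → N` of a functional `φ` on `M`. -/
noncomputable def leftSlice (φ : Module.Dual R M) : M ⊗[R] N →ₗ[R] N :=
  (TensorProduct.lid R N).toLinearMap ∘ₗ φ.rTensor N

/-- The slice map `id ⊗ f : M ⊗ N → M` of a functional `f` on `N`. -/
noncomputable def rightSlice (f : Module.Dual R N) : M ⊗[R] N →ₗ[R] M :=
  (TensorProduct.rid R M).toLinearMap ∘ₗ f.lTensor M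

@[simp]
theorem leftSlice_tmul (φ : Module.Dual R M) (m : M) (n : N) :
    leftSlice φ (m ⊗ₜ[R] n) = φ m • n := by
  simp [leftSlice]

@[simp]
theorem rightSlice_tmul (f : Module.Dual R N) (m : M) (n : N) :
    rightSlice f (m ⊗ₜ[R] n) = f n • m := by
  simp [rightSlice]

theorem leftSlice_lTensor (φ : Module.Dual R M) (g : N →ₗ[R] P) (x : M ⊗[R] N) :
    leftSlice φ (g.lTensor M x) = g (leftSlice φ x) := by
  have h : leftSlice φ ∘ₗ g.lTensor M = g ∘ₗ leftSlice φ := by ext; simp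
  exact LinearMap.congr_fun h x

theorem rightSlice_rTensor (f : Module.Dual R N) (g : M →ₗ[R] P) (x : M ⊗[R] N) :
    rightSlice f (g.rTensor N x) = g (rightSlice f x) := by
  have h : rightSlice f ∘ₗ g.rTensor N = g ∘ₗ rightSlice f := by ext; simp
  exact LinearMap.congr_fun h x

theorem leftSlice_comm (f : Module.Dual R N) (x : M ⊗[R] N) :
    leftSlice f (TensorProduct.comm R M N x) = rightSlice f x := by
  have h : leftSlice f ∘ₗ (TensorProduct.comm R M N).toLinearMap = rightSlice f := by ext; simp
  exact LinearMap.congr_fun h x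

theorem apply_leftSlice (φ : Module.Dual R M) (f : Module.Dual R N) (x : M ⊗[R] N) :
    f (leftSlice φ x) = φ (rightSlice f x) := by
  have h : f ∘ₗ leftSlice φ = φ ∘ₗ rightSlice f := by ext; simp [mul_comm]
  exact LinearMap.congr_fun h x

end Semiring

variable {R M N : Type*} [CommRing R] [AddCommGroup M] [Module R M] [AddCommGroup N] [Module R N]

theorem rightSlice_apply (f : Module.Dual R N) (x : Module.Dual R M ⊗[R] N) (m : M) :
    rightSlice f x m = f (dualTensorHom R M N x m) := by
  induction x with
  | zero => simp
  | add x y hx hy => simp only [map_add, LinearMap.add_apply, hx, hy]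
  | tmul φ n => simp [mul_comm]

theorem forall_leftSlice_eq_zero_iff [Module.Free R M] {x : M ⊗[R] N} :
    (∀ φ : Module.Dual R M, leftSlice φ x = 0) ↔ x = 0 := by
  refine ⟨fun h => ?_, fun h φ => by rw [h, map_zero]⟩
  let b := Module.Free.chooseBasis R M
  apply (TensorProduct.equivFinsuppOfBasisLeft b).injective
  ext i
  simpa [TensorProduct.equivFinsuppOfBasisLeft_apply, leftSlice] using h (b.coord i)

theorem forall_rightSlice_eq_zero_iff [Module.Free R N] {x : M ⊗[R] N} :
    (∀ f : Module.Dual R N, rightSlice f x = 0) ↔ x = 0 := by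
  simp only [← leftSlice_comm, forall_leftSlice_eq_zero_iff, LinearEquiv.map_eq_zero_iff]

theorem eq_of_forall_rightSlice_eq [Module.Free R N] {x y : M ⊗[R] N}
    (h : ∀ f : Module.Dual R N, rightSlice f x = rightSlice f y) : x = y := by
  rw [← sub_eq_zero, ← forall_rightSlice_eq_zero_iff]
  exact fun f => by rw [map_sub, h, sub_self]

theorem mem_range_lTensor_subtype_iff [Module.Free R M] {D : Submodule R N} {x : M ⊗[R] N} :
    x ∈ LinearMap.range (D.subtype.lTensor M) ↔
      ∀ φ : Module.Dual R M, leftSlice φ x ∈ D := by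
  have hexact := lTensor_exact M (LinearMap.exact_subtype_mkQ D) D.mkQ_surjective
  rw [← LinearMap.exact_iff.1 hexact, LinearMap.mem_ker, ← forall_leftSlice_eq_zero_iff]
  simp only [leftSlice_lTensor, Submodule.mkQ_apply, Submodule.Quotient.mk_eq_zero]

theorem mem_range_rTensor_subtype_iff [Module.Free R N] {U : Submodule R M} {x : M ⊗[R] N} :
    x ∈ LinearMap.range (U.subtype.rTensor N) ↔
      ∀ f : Module.Dual R N, rightSlice f x ∈ U := by
  have hexact := rTensor_exact N (LinearMap.exact_subtype_mkQ U) U.mkQ_surjective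
  rw [← LinearMap.exact_iff.1 hexact, LinearMap.mem_ker, ← forall_rightSlice_eq_zero_iff]
  simp only [rightSlice_rTensor, Submodule.mkQ_apply, Submodule.Quotient.mk_eq_zero]

end Slice

section ConvAction

variable {R M C : Type*} [CommSemiring R] [AddCommMonoid M] [Module R M] [AddCommMonoid C]
  [Module R C]

/-- The action `f · v = v₀ f(v₁)` on `M` of the functionals on `C` defined by `ρ`. Functionals are
taken in the type synonym `WithConv`, whose multiplication is convolution: `ρ` is a coaction if and
only if this is a representation of the convolution algebra `C*`. -/
noncomputable def convAction (ρ : M →ₗ[R] M ⊗[R] C) :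
    WithConv (C →ₗ[R] R) →ₗ[R] Module.End R M where
  toFun f := rightSlice f.ofConv ∘ₗ ρ
  map_add' f g := by
    simp [rightSlice, LinearMap.lTensor_add, LinearMap.add_comp, LinearMap.comp_add]
  map_smul' c f := by
    simp [rightSlice, LinearMap.lTensor_smul, LinearMap.smul_comp, LinearMap.comp_smul]

theorem convAction_apply (ρ : M →ₗ[R] M ⊗[R] C) (f : WithConv (C →ₗ[R] R)) (m : M) :
    convAction ρ f m = rightSlice f.ofConv (ρ m) := rfl

theorem rightSlice_rightSlice_rTensor (ρ : M →ₗ[R] M ⊗[R] C) (f g : WithConv (C →ₗ[R] R))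
    (m : M) : rightSlice f.ofConv (rightSlice g.ofConv (ρ.rTensor C (ρ m))) =
      convAction ρ f (convAction ρ g m) := by
  rw [rightSlice_rTensor, convAction_apply, convAction_apply]

theorem rightSlice_rightSlice_assoc_symm_lTensor_comul [Coalgebra R C]
    (f g : WithConv (C →ₗ[R] R)) (x : M ⊗[R] C) :
    rightSlice f.ofConv (rightSlice g.ofConv
      ((TensorProduct.assoc R M C C).symm ((comul (R := R) (A := C)).lTensor M x))) =
      rightSlice (f * g).ofConv x := by
  induction x with
  | zero => simp
  | add x y hx hy => simp only [map_add, hx, hy]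
  | tmul m c =>
    rw [LinearMap.lTensor_tmul, rightSlice_tmul, LinearMap.convMul_apply]
    induction comul (R := R) c with
    | zero => simp
    | add x y hx hy => simp only [map_add, TensorProduct.tmul_add, hx, hy, add_smul]
    | tmul c d => simp [smul_smul, mul_comm]

end ConvAction

section Comodule

variable {k C V W : Type u} [Field k] [AddCommGroup C] [Module k C] [AddCommGroup V] [Module k V]
  [AddCommGroup W] [Module k W]

theorem isSubcomod_iff {ρ : V →ₗ[k] V ⊗[k] C} {U : Submodule k V} :
    IsSubcomod k C ρ U ↔ ∀ f, ∀ u ∈ U, convAction ρ f u ∈ U := by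
  simp only [IsSubcomod, mem_range_rTensor_subtype_iff]
  exact ⟨fun h f u hu => h u hu f.ofConv, fun h u hu f => h (toConv f) u hu⟩

theorem isComodHom_iff {ρV : V →ₗ[k] V ⊗[k] C} {ρW : W →ₗ[k] W ⊗[k] C} {g : V →ₗ[k] W} :
    IsComodHom k C ρV ρW g ↔ ∀ f v, g (convAction ρV f v) = convAction ρW f (g v) := by
  simp only [convAction_apply, ← rightSlice_rTensor]
  exact ⟨fun h f v => congrArg _ (LinearMap.congr_fun h v).symm, fun h => LinearMap.ext fun v =>
    eq_of_forall_rightSlice_eq fun f => (h (toConv f) v).symm⟩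

theorem leftSlice_mem_coeffSpace (ρ : V →ₗ[k] V ⊗[k] C) (φ : Module.Dual k V) (v : V) :
    leftSlice φ (ρ v) ∈ coeffSpace k C ρ :=
  Submodule.mem_sInf.2 fun _ hD => mem_range_lTensor_subtype_iff.1 (hD v) φ

theorem mem_dualAnnihilator_coeffSpace_iff {ρ : V →ₗ[k] V ⊗[k] C} {f : C →ₗ[k] k} :
    f ∈ (coeffSpace k C ρ).dualAnnihilator ↔ convAction ρ (toConv f) = 0 := by
  have hslice : convAction ρ (toConv f) = 0 ↔ ∀ v φ, f (leftSlice φ (ρ v)) = 0 := by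
    simp only [apply_leftSlice, Module.forall_dual_apply_eq_zero_iff]
    exact LinearMap.ext_iff
  rw [hslice, Submodule.mem_dualAnnihilator]
  refine ⟨fun h v φ => h _ (leftSlice_mem_coeffSpace ρ φ v), fun h => ?_⟩
  have hle : coeffSpace k C ρ ≤ LinearMap.ker f :=
    sInf_le fun v => mem_range_lTensor_subtype_iff.2 (h v)
  exact hle

theorem IsSimpleComod.nontrivial {ρ : V →ₗ[k] V ⊗[k] C} (h : IsSimpleComod k C ρ) :
    Nontrivial V := by
  by_contra hV
  rw [not_nontrivial_iff_subsingleton] at hV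
  exact h.2.1 (Subsingleton.elim _ _)

variable [Coalgebra k C]

theorem isComod_iff {ρ : V →ₗ[k] V ⊗[k] C} :
    IsComod k C ρ ↔
      (∀ f g, convAction ρ (f * g) = convAction ρ f * convAction ρ g) ∧ convAction ρ 1 = 1 := by
  constructor
  · intro h
    refine ⟨fun f g => LinearMap.ext fun v => ?_, LinearMap.ext h.counit⟩
    rw [Module.End.mul_apply, ← rightSlice_rightSlice_rTensor, h.coassoc]
    exact (rightSlice_rightSlice_assoc_symm_lTensor_comul f g (ρ v)).symm
  · rintro ⟨hmul, hone⟩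
    refine ⟨fun v => ?_, LinearMap.congr_fun hone⟩
    refine eq_of_forall_rightSlice_eq fun g => eq_of_forall_rightSlice_eq fun f => ?_
    calc
      _ = convAction ρ (toConv f * toConv g) v := by
        rw [hmul]; exact rightSlice_rightSlice_rTensor ρ (toConv f) (toConv g) v
      _ = _ := (rightSlice_rightSlice_assoc_symm_lTensor_comul (toConv f) (toConv g) (ρ v)).symm

/-- The representation of the convolution algebra `C*` on a right `C`-comodule. -/
noncomputable def IsComod.convActionHom {ρ : V →ₗ[k] V ⊗[k] C} (h : IsComod k C ρ) :
    WithConv (C →ₗ[k] k) →ₐ[k] Module.End k V :=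
  .ofLinearMap (convAction ρ) (isComod_iff.1 h).2 (isComod_iff.1 h).1

/-- A right `C`-comodule as a module over the convolution algebra `C*`. It is not an instance, since
it depends on the coaction. -/
noncomputable abbrev IsComod.convModule {ρ : V →ₗ[k] V ⊗[k] C} (h : IsComod k C ρ) :
    Module (WithConv (C →ₗ[k] k)) V :=
  Module.compHom V h.convActionHom.toRingHom

theorem IsComod.isScalarTower_convModule {ρ : V →ₗ[k] V ⊗[k] C} (h : IsComod k C ρ) :
    letI := h.convModule
    IsScalarTower k (WithConv (C →ₗ[k] k)) V :=
  letI := h.convModule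
  .of_algebraMap_smul fun c => LinearMap.congr_fun (h.convActionHom.commutes c)

theorem IsSimpleComod.isSimpleModule {ρ : V →ₗ[k] V ⊗[k] C} (hsimple : IsSimpleComod k C ρ)
    (h : IsComod k C ρ) :
    letI := h.convModule
    IsSimpleModule (WithConv (C →ₗ[k] k)) V := by
  let := h.convModule
  have := h.isScalarTower_convModule
  have := hsimple.nontrivial
  rw [isSimpleModule_iff]
  refine { eq_bot_or_eq_top U := ?_ }
  have hU : IsSubcomod k C ρ (U.restrictScalars k) := isSubcomod_iff.2 fun f _ => U.smul_mem f
  simpa using hsimple.2.2 (U.restrictScalars k) le_top hU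

theorem exists_linearEquiv_isComodHom_of_coeffSpace_le [FiniteDimensional k V]
    {ρV : V →ₗ[k] V ⊗[k] C} {ρW : W →ₗ[k] W ⊗[k] C} (hV : IsComod k C ρV)
    (hW : IsComod k C ρW) (hsimple : IsSimpleComod k C ρV)
    (hcoeff : coeffSpace k C ρW ≤ coeffSpace k C ρV)
    (hdim : Module.finrank k V = Module.finrank k W) :
    ∃ e : V ≃ₗ[k] W, IsComodHom k C ρV ρW e.toLinearMap := by
  let := hV.convModule
  let := hW.convModule
  have := hV.isScalarTower_convModule
  have := hW.isScalarTower_convModule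
  have := hsimple.isSimpleModule hV
  have hann : Module.annihilator (WithConv (C →ₗ[k] k)) V ≤
      Module.annihilator (WithConv (C →ₗ[k] k)) W := by
    intro f hf
    have hVf : f.ofConv ∈ (coeffSpace k C ρV).dualAnnihilator :=
      mem_dualAnnihilator_coeffSpace_iff.2 (LinearMap.ext (Module.mem_annihilator.1 hf))
    have hWf := Submodule.dualAnnihilator_anti hcoeff hVf
    exact Module.mem_annihilator.2 (LinearMap.congr_fun (mem_dualAnnihilator_coeffSpace_iff.1 hWf))
  obtain ⟨e⟩ := nonempty_linearEquiv_of_annihilator_le hann hdim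
  exact ⟨e.restrictScalars k, isComodHom_iff.2 e.map_smul⟩

end Comodule

section Antipode

variable {R A : Type*} [CommSemiring R] [Semiring A] [HopfAlgebra R A]

/- In the convolution algebra of maps `A → A ⊗ A`, the comultiplication is the product of the two
inclusions, so its convolution inverse is the product of their inverses in the opposite order. -/
theorem comul_comp_antipode :
    comul (R := R) (A := A) ∘ₗ antipode R =
      TensorProduct.map (antipode R) (antipode R) ∘ₗ
        (TensorProduct.comm R A A).toLinearMap ∘ₗ comul := by
  let L : A →ₐ[R] A ⊗[R] A := Algebra.TensorProduct.includeLeft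
  let Q : A →ₐ[R] A ⊗[R] A := Algebra.TensorProduct.includeRight
  have cancel (i : A →ₐ[R] A ⊗[R] A) :
      toConv (i.toLinearMap ∘ₗ antipode R) * toConv i.toLinearMap = 1 := by
    have h := LinearMap.algHom_comp_convMul_distrib i (toConv (antipode R)) (toConv LinearMap.id)
    rw [LinearMap.antipode_mul_id, LinearMap.algHom_comp_convOne] at h
    exact ofConv_injective h.symm
  have hcomul : toConv L.toLinearMap * toConv Q.toLinearMap = toConv (comul (R := R) (A := A)) := by
    have h : LinearMap.mul' R (A ⊗[R] A) ∘ₗ TensorProduct.map L.toLinearMap Q.toLinearMap =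
        LinearMap.id := by ext; simp [L, Q]
    rw [LinearMap.convMul_def, ← LinearMap.comp_assoc, h, LinearMap.id_comp]
  have hinv : toConv (Q.toLinearMap ∘ₗ antipode R) * toConv (L.toLinearMap ∘ₗ antipode R) *
      toConv (comul (R := R) (A := A)) = 1 := by
    rw [← hcomul, mul_assoc, ← mul_assoc _ (toConv L.toLinearMap), cancel, one_mul, cancel]
  have hswap : LinearMap.mul' R (A ⊗[R] A) ∘ₗ
      TensorProduct.map (Q.toLinearMap ∘ₗ antipode R) (L.toLinearMap ∘ₗ antipode R) =
        TensorProduct.map (antipode R) (antipode R) ∘ₗ (TensorProduct.comm R A A).toLinearMap := by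
    ext; simp [L, Q]
  rw [← LinearMap.comp_assoc, ← hswap]
  exact congrArg ofConv (left_inv_eq_right_inv hinv LinearMap.comul_right_inv).symm

theorem toConv_mul_comp_antipode (f g : WithConv (A →ₗ[R] R)) :
    toConv ((f * g).ofConv ∘ₗ antipode R) =
      toConv (g.ofConv ∘ₗ antipode R) * toConv (f.ofConv ∘ₗ antipode R) := by
  have h : LinearMap.mul' R R ∘ₗ TensorProduct.map f.ofConv g.ofConv ∘ₗ
      TensorProduct.map (antipode R) (antipode R) ∘ₗ (TensorProduct.comm R A A).toLinearMap =
        LinearMap.mul' R R ∘ₗ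
          TensorProduct.map (g.ofConv ∘ₗ antipode R) (f.ofConv ∘ₗ antipode R) := by
    ext; simp [mul_comm]
  simp only [LinearMap.convMul_def, LinearMap.comp_assoc, comul_comp_antipode]
  simp only [← LinearMap.comp_assoc] at h ⊢
  rw [h]

end Antipode

section Dual

variable {k H V : Type u} [Field k] [Ring H] [HopfAlgebra k H] [AddCommGroup V] [Module k V]
  [FiniteDimensional k V]

theorem dualTensorHom_dualCoact (ρ : V →ₗ[k] V ⊗[k] H) (φ : Module.Dual k V) (v : V) :
    dualTensorHom k V H (dualCoact k ρ φ) v = antipode k (leftSlice φ (ρ v)) := by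
  have hslice : (TensorProduct.lid k H).toLinearMap ∘ₗ TensorProduct.map φ (antipode k) =
      antipode k ∘ₗ leftSlice φ := by ext; simp
  have hdual : dualTensorHom k V H (dualCoact k ρ φ) = dualPrecoact k ρ φ :=
    (dualTensorHomEquiv k V H).apply_symm_apply _
  rw [hdual]
  exact LinearMap.congr_fun hslice (ρ v)

theorem convAction_dualCoact (ρ : V →ₗ[k] V ⊗[k] H) (f : WithConv (H →ₗ[k] k)) :
    convAction (dualCoact k ρ) f =
      Module.Dual.transpose (convAction ρ (toConv (f.ofConv ∘ₗ antipode k))) := by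
  ext φ v
  rw [convAction_apply, rightSlice_apply, dualTensorHom_dualCoact]
  exact apply_leftSlice φ (f.ofConv ∘ₗ antipode k) (ρ v)

theorem isComod_dualCoact {ρ : V →ₗ[k] V ⊗[k] H} (h : IsComod k H ρ) :
    IsComod k H (dualCoact k ρ) := by
  obtain ⟨hmul, hone⟩ := isComod_iff.1 h
  refine isComod_iff.2 ⟨fun f g => ?_, ?_⟩
  · simp only [convAction_dualCoact, toConv_mul_comp_antipode, hmul]
    rfl
  · have hcounit : toConv ((1 : WithConv (H →ₗ[k] k)).ofConv ∘ₗ antipode k) = 1 :=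
      congrArg toConv (counit_comp_antipode (R := k) (A := H))
    rw [convAction_dualCoact, hcounit, hone]
    rfl

theorem coeffSpace_dualCoact (ρ : V →ₗ[k] V ⊗[k] H) :
    coeffSpace k H (dualCoact k ρ) = (coeffSpace k H ρ).map (antipode k) := by
  rw [← Subspace.dualAnnihilator_inj]
  ext f
  calc
    f ∈ (coeffSpace k H (dualCoact k ρ)).dualAnnihilator
      ↔ Module.Dual.transpose (convAction ρ (toConv (f ∘ₗ antipode k))) = 0 := by
        rw [mem_dualAnnihilator_coeffSpace_iff, convAction_dualCoact]
    _ ↔ convAction ρ (toConv (f ∘ₗ antipode k)) = 0 := by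
        refine ⟨fun h => ?_, fun h => by rw [h, map_zero]⟩
        exact LinearMap.ext fun v => (Module.forall_dual_apply_eq_zero_iff k _).1 fun φ =>
          LinearMap.congr_fun (LinearMap.congr_fun h φ) v
    _ ↔ f ∘ₗ antipode k ∈ (coeffSpace k H ρ).dualAnnihilator :=
        mem_dualAnnihilator_coeffSpace_iff.symm
    _ ↔ f ∈ ((coeffSpace k H ρ).map (antipode k)).dualAnnihilator := by
        rw [Submodule.mem_dualAnnihilator, Submodule.mem_dualAnnihilator]
        exact (Set.forall_mem_image (p := fun x => f x = 0)).symm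

end Dual

section Coevaluation

variable {k W : Type*} [Field k] [AddCommGroup W] [Module k W] [FiniteDimensional k W]

theorem dualTensorHom_comm_coevaluation :
    dualTensorHom k W W (TensorProduct.comm k W (Module.Dual k W) (coevaluation k W 1)) =
      LinearMap.id := by
  rw [coevaluation_apply_one]
  ext w
  simpa using (Module.Basis.ofVectorSpace k W).sum_repr w

theorem coevaluation_apply_one_ne_zero [Nontrivial W] : coevaluation k W 1 ≠ 0 := by
  intro h
  have hid := dualTensorHom_comm_coevaluation (k := k) (W := W)
  rw [h, map_zero, map_zero] at hid
  obtain ⟨w, hw⟩ := exists_ne (0 : W)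
  exact hw (LinearMap.congr_fun hid w).symm

end Coevaluation

section TensorDual

variable {R M A : Type*} [CommRing R] [AddCommGroup M] [Module R M] [Module.Free R M]
  [Module.Finite R M] [AddCommGroup A] [Module R A]

/-- The identification of `(M ⊗ M*) ⊗ A` with the linear maps `M → M ⊗ A` that evaluates the
second tensor factor. -/
noncomputable def tensorDualTensorEquivHom :
    (M ⊗[R] Module.Dual R M) ⊗[R] A ≃ₗ[R] (M →ₗ[R] M ⊗[R] A) :=
  (TensorProduct.comm R M (Module.Dual R M)).rTensor A ≪≫ₗ
    TensorProduct.assoc R (Module.Dual R M) M A ≪≫ₗ dualTensorHomEquiv R M (M ⊗[R] A)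

theorem tensorDualTensorEquivHom_tmul (t : M ⊗[R] Module.Dual R M) (a : A) (m : M) :
    tensorDualTensorEquivHom (t ⊗ₜ[R] a) m =
      dualTensorHom R M M (TensorProduct.comm R M (Module.Dual R M) t) m ⊗ₜ[R] a := by
  induction t with
  | zero => simp
  | add t s ht hs => simp only [TensorProduct.add_tmul, map_add, LinearMap.add_apply, ht, hs]
  | tmul n φ => simp [tensorDualTensorEquivHom, TensorProduct.smul_tmul']

theorem tensorDualTensorEquivHom_tensorTensorTensorComm {B D : Type*} [AddCommGroup B]
    [Module R B] [AddCommGroup D] [Module R D] (g : A ⊗[R] B →ₗ[R] D) (x : M ⊗[R] A)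
    (y : Module.Dual R M ⊗[R] B) (m : M) :
    tensorDualTensorEquivHom (g.lTensor (M ⊗[R] Module.Dual R M)
      (TensorProduct.tensorTensorTensorComm R M A (Module.Dual R M) B (x ⊗ₜ[R] y))) m =
      g.lTensor M (TensorProduct.assoc R M A B (x ⊗ₜ[R] dualTensorHom R M B y m)) := by
  induction x with
  | zero => simp
  | add x z hx hz => simp only [TensorProduct.add_tmul, map_add, LinearMap.add_apply, hx, hz]
  | tmul n a =>
    induction y with
    | zero => simp
    | add y z hy hz => simp only [TensorProduct.tmul_add, map_add, LinearMap.add_apply, hy, hz]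
    | tmul φ b => simp [tensorDualTensorEquivHom, TensorProduct.tmul_smul]

end TensorDual

section Invariant

theorem lTensor_mul_assoc_lTensor_antipode {R A M : Type*} [CommSemiring R] [Semiring A]
    [HopfAlgebra R A] [AddCommMonoid M] [Module R M] (x : M ⊗[R] A) :
    (LinearMap.mul' R A).lTensor M (TensorProduct.assoc R M A A
      ((antipode R).lTensor (M ⊗[R] A)
        ((TensorProduct.assoc R M A A).symm ((comul (R := R) (A := A)).lTensor M x)))) =
      TensorProduct.rid R M ((counit (R := R) (A := A)).lTensor M x) ⊗ₜ[R] 1 := by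
  simp only [LinearMap.lTensor_tensor, LinearMap.comp_apply, LinearEquiv.coe_coe,
    LinearEquiv.apply_symm_apply]
  induction x with
  | zero => simp
  | add x y hx hy => simp only [map_add, hx, hy, TensorProduct.add_tmul]
  | tmul m a =>
    simp only [LinearMap.lTensor_tmul, mul_antipode_lTensor_comul_apply, TensorProduct.rid_tmul,
      Algebra.algebraMap_eq_smul_one, TensorProduct.smul_tmul]

variable {k H V : Type u} [Field k] [Ring H] [HopfAlgebra k H] [AddCommGroup V] [Module k V]

theorem IsComod.lTensor_mul_assoc_map_antipode {ρ : V →ₗ[k] V ⊗[k] H} (h : IsComod k H ρ) (v : V) :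
    (LinearMap.mul' k H).lTensor V (TensorProduct.assoc k V H H
      (TensorProduct.map ρ (antipode k) (ρ v))) = v ⊗ₜ[k] 1 := by
  rw [← LinearMap.lTensor_comp_rTensor, LinearMap.comp_apply, h.coassoc]
  exact (lTensor_mul_assoc_lTensor_antipode (ρ v)).trans (congrArg (· ⊗ₜ[k] 1) (h.counit v))

variable [FiniteDimensional k V]

theorem tensorDualTensorEquivHom_tensorCoact (ρ : V →ₗ[k] V ⊗[k] H)
    (t : V ⊗[k] Module.Dual k V) (v : V) :
    tensorDualTensorEquivHom (tensorCoact k H ρ (dualCoact k ρ) t) v =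
      (LinearMap.mul' k H).lTensor V (TensorProduct.assoc k V H H
        (TensorProduct.map (ρ ∘ₗ dualTensorHom k V V (TensorProduct.comm k V (Module.Dual k V) t))
          (antipode k) (ρ v))) := by
  induction t with
  | zero => simp
  | add t s ht hs =>
    simp only [map_add, LinearMap.add_apply, ht, hs, LinearMap.comp_add, TensorProduct.map_add_left]
  | tmul w φ =>
    have hslice (x : V ⊗[k] H) : ρ w ⊗ₜ[k] antipode k (leftSlice φ x) =
        TensorProduct.map (ρ ∘ₗ dualTensorHom k V V (φ ⊗ₜ w)) (antipode k) x := by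
      induction x with
      | zero => simp
      | add x y hx hy => simp only [map_add, TensorProduct.tmul_add, hx, hy]
      | tmul u a => simp [TensorProduct.smul_tmul]
    calc
      _ = (LinearMap.mul' k H).lTensor V (TensorProduct.assoc k V H H
          (ρ w ⊗ₜ[k] dualTensorHom k V H (dualCoact k ρ φ) v)) :=
        tensorDualTensorEquivHom_tensorTensorTensorComm _ _ _ _
      _ = _ := by rw [dualTensorHom_dualCoact, hslice, TensorProduct.comm_tmul]

theorem IsComod.isInvariant_coevaluation {ρ : V →ₗ[k] V ⊗[k] H} (h : IsComod k H ρ) :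
    IsInvariant k H (tensorCoact k H ρ (dualCoact k ρ)) (coevaluation k V 1) := by
  apply tensorDualTensorEquivHom.injective
  ext v
  rw [tensorDualTensorEquivHom_tensorCoact, tensorDualTensorEquivHom_tmul,
    dualTensorHom_comm_coevaluation, LinearMap.comp_id, h.lTensor_mul_assoc_map_antipode,
    LinearMap.id_apply]

end Invariant

section DoubleDual

variable {k H V : Type u} [Field k] [Ring H] [HopfAlgebra k H] [AddCommGroup V] [Module k V]
  [FiniteDimensional k V]

theorem coeffSpace_dualCoact_dualCoact (ρ : V →ₗ[k] V ⊗[k] H) :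
    coeffSpace k H (dualCoact k (dualCoact k ρ)) =
      (coeffSpace k H ρ).map (antipode k ∘ₗ antipode k) := by
  rw [coeffSpace_dualCoact, coeffSpace_dualCoact, Submodule.map_comp]

theorem IsComod.exists_linearEquiv_isComodHom_dualCoact_dualCoact {ρ : V →ₗ[k] V ⊗[k] H}
    (h : IsComod k H ρ) (hsimple : IsSimpleComod k H ρ)
    (hS2 : (coeffSpace k H ρ).map (antipode k ∘ₗ antipode k) ≤ coeffSpace k H ρ) :
    ∃ e : V ≃ₗ[k] Module.Dual k (Module.Dual k V),
      IsComodHom k H ρ (dualCoact k (dualCoact k ρ)) e.toLinearMap := by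
  have hcoeff : coeffSpace k H (dualCoact k (dualCoact k ρ)) ≤ coeffSpace k H ρ :=
    (coeffSpace_dualCoact_dualCoact ρ).trans_le hS2
  have hdim : Module.finrank k V = Module.finrank k (Module.Dual k (Module.Dual k V)) := by
    rw [Subspace.dual_finrank_eq, Subspace.dual_finrank_eq]
  exact exists_linearEquiv_isComodHom_of_coeffSpace_le h
    (isComod_dualCoact (isComod_dualCoact h)) hsimple hcoeff hdim

end DoubleDual

end QG

open QG HopfAlgebra in
theorem statement_8_general (k : Type u) [Field k]
    (H : Type u) [Ring H] [HopfAlgebra k H]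
    (V : Type u) [AddCommGroup V] [Module k V] [FiniteDimensional k V]
    (ρ : V →ₗ[k] V ⊗[k] H) (hcom : IsComod k H ρ) (hsim : IsSimpleComod k H ρ)
    (hS2 : (coeffSpace k H ρ).map
        ((antipode (R := k) (A := H)) ∘ₗ (antipode (R := k) (A := H))) ≤
      coeffSpace k H ρ) :
    (∃ e : V ≃ₗ[k] Module.Dual k (Module.Dual k V),
      IsComodHom k H ρ (dualCoact k (dualCoact k ρ)) e.toLinearMap) ∧
    (coevaluation k (Module.Dual k V)) 1 ≠ 0 ∧
    IsInvariant k H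
      (tensorCoact k H (dualCoact k ρ) (dualCoact k (dualCoact k ρ)))
      ((coevaluation k (Module.Dual k V)) 1) := by
  have : Nontrivial V := hsim.nontrivial
  exact ⟨hcom.exists_linearEquiv_isComodHom_dualCoact_dualCoact hsim hS2,
    coevaluation_apply_one_ne_zero, (isComod_dualCoact hcom).isInvariant_coevaluation⟩

open QG HopfAlgebra in
/-- Let `H` be a Hopf algebra with bijective antipode and
`V` a simple finite-dimensional right `H`-comodule whose coefficient
coalgebra `C_V` satisfies `S²(C_V) = C_V`.  Then `V ≅ V**` as `H`-comodules,
and the comodule `V* ⊗ V**` (`≅ V* ⊗ V = C_V` with the adjoint coaction)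
contains a nonzero invariant vector, namely the image of the coevaluation. -/
theorem statement_8 (k : Type u) [Field k] [IsAlgClosed k]
    (H : Type u) [Ring H] [HopfAlgebra k H]
    (hbij : Function.Bijective (antipode (R := k) (A := H)))
    (V : Type u) [AddCommGroup V] [Module k V] [FiniteDimensional k V]
    (ρ : V →ₗ[k] V ⊗[k] H) (hcom : IsComod k H ρ) (hsim : IsSimpleComod k H ρ)
    (hS2 : (coeffSpace k H ρ).map
        ((antipode (R := k) (A := H)) ∘ₗ (antipode (R := k) (A := H))) =
      coeffSpace k H ρ) :
    (∃ e : V ≃ₗ[k] Module.Dual k (Module.Dual k V),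
      IsComodHom k H ρ (dualCoact k (dualCoact k ρ)) e.toLinearMap) ∧
    (coevaluation k (Module.Dual k V)) 1 ≠ 0 ∧
    IsInvariant k H
      (tensorCoact k H (dualCoact k ρ) (dualCoact k (dualCoact k ρ)))
      ((coevaluation k (Module.Dual k V)) 1) := by
  exact statement_8_general k H V ρ hcom hsim hS2.le
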